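/- Let E : ℕ → ℕ → ℕ be the recursively defined sequence (see context). Then for every t ≥ 2, E (2^t) (2t − 2) ≥ 2^{t−2}. That is, dim Ext^{2t−2}(Δ(0), Δ(2·2^t)) is at least 2^{t−2} in characteristic 2. -/

import Mathlib

/-- For `p = 2`, the recursively defined dimensions `E d m = dim Ext^m(Δ(0), Δ(2d))`:
`E 0 0 = 1`, `E 0 m = 0` for `m ≥ 1`, and for `d ≥ 1`:
`E d m = (if m ≥ 1 then E (d-1) (m-1) else 0) + (if d is odd then E ((d-1)/2) m else 0)`. -/
def E : ℕ → ℕ → ℕ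
  | 0, 0 => 1
  | 0, _ + 1 => 0
  | d + 1, 0 => if Odd (d + 1) then E (d / 2) 0 else 0
  | d + 1, m + 1 => E d m + if Odd (d + 1) then E (d / 2) (m + 1) else 0
termination_by d m => d
decreasing_by all_goals omega

/-! `E d m` counts the partitions of `d + 1` into `m + 1` powers of two: a part equal to `1` can be
removed (`d ↦ d - 1`, `m ↦ m - 1`), and if there is none, `d + 1` is even and all parts can be
halved. Doubling every part of such a partition of `2 ^ t` and then splitting two parts gives a
partition of `2 ^ (t + 1)` with two more parts. When there are at least six parts, this leads to
at least twice as many partitions: `2 * E (2 ^ t) m ≤ E (2 ^ (t + 1)) (m + 2)`. Hence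
`E (2 ^ t) (2 * t - 2)` at least doubles in each step from `t = 4` on, where it equals `4`. -/

theorem E_even_zero (d : ℕ) : E (2 * d + 2) 0 = 0 := by
  rw [E, if_neg (by grind)]

theorem E_even_succ (d m : ℕ) : E (2 * d + 2) (m + 1) = E (2 * d + 1) m := by
  rw [E, if_neg (by grind), add_zero]

theorem E_odd_zero (d : ℕ) : E (2 * d + 1) 0 = E d 0 := by
  rw [E, if_pos (odd_two_mul_add_one d), Nat.mul_div_cancel_left d two_pos]

theorem E_odd_succ (d m : ℕ) : E (2 * d + 1) (m + 1) = E (2 * d) m + E d (m + 1) := by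
  rw [E, if_pos (odd_two_mul_add_one d), Nat.mul_div_cancel_left d two_pos]

theorem E_odd_add_two (d m : ℕ) :
    E (2 * d + 3) (m + 2) = E (2 * d + 1) m + E (d + 1) (m + 2) := by
  rw [← E_even_succ d m]
  exact E_odd_succ (d + 1) (m + 1)

theorem E_le_E_succ_succ (d m : ℕ) : E d m ≤ E (d + 1) (m + 1) := by
  rw [E]
  exact Nat.le_add_right _ _

theorem E_eq_zero_of_lt {d m : ℕ} (h : d < m) : E d m = 0 := by
  induction d using Nat.strong_induction_on generalizing m with
  | _ d ih =>
    obtain ⟨m, rfl⟩ := Nat.exists_eq_succ_of_ne_zero (by omega : m ≠ 0)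
    obtain _ | d := d
    · rw [E]
    · rw [E, ih d (by omega) (by omega), ih (d / 2) (by omega) (by omega), ite_self]

theorem E_le_E_two_mul_add_one (d m : ℕ) : E d m ≤ E (2 * d + 1) m := by
  cases m with
  | zero => exact (E_odd_zero d).ge
  | succ m => exact (Nat.le_add_left _ _).trans_eq (E_odd_succ d m).symm

-- In terms of partitions: double each of the `m + 1` parts, then split `j` of them into halves.
theorem E_le_E_two_mul_add_one_add {m j : ℕ} (d : ℕ) (hj : j ≤ m + 1) :
    E d m ≤ E (2 * d + 1) (m + j) := by
  induction d using Nat.strong_induction_on generalizing m j with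
  | _ d ih =>
    obtain _ | j := j
    · exact E_le_E_two_mul_add_one d m
    obtain ⟨a, rfl | rfl⟩ := Nat.even_or_odd' d
    · obtain _ | b := a
      · obtain _ | m := m
        · obtain rfl : j = 0 := by omega
          exact E_le_E_succ_succ 0 0
        · simp [E]
      obtain _ | m := m
      · simp [mul_add, E_even_zero]
      calc E (2 * b + 2) (m + 1)
          = E (2 * b + 1) m := E_even_succ b m
        _ ≤ E (2 * (2 * b + 1) + 1) (m + j) := ih _ (by omega) (by omega)
        _ = E (2 * (2 * b + 1) + 2) (m + j + 1) := (E_even_succ _ _).symm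
        _ ≤ E (2 * (2 * b + 2) + 1) (m + 1 + (j + 1)) := by
          grind [E_le_E_succ_succ (2 * (2 * b + 1) + 2) (m + j + 1)]
    · have half : E a m ≤ E (2 * a + 1) (m + (j + 1)) := ih a (by omega) hj
      have expand : E (2 * (2 * a + 1) + 1) (m + (j + 1)) =
          E (2 * (2 * a) + 2) (m + j) + E (2 * a + 1) (m + (j + 1)) := E_odd_succ _ _
      obtain _ | m := m
      · rw [E_odd_zero, expand]
        omega
      have rest : E (2 * a) m ≤ E (2 * (2 * a) + 1) (m + j) := ih _ (by omega) (by omega)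
      rw [E_odd_succ, expand, Nat.add_right_comm m 1 j, E_even_succ]
      omega

-- In terms of partitions: a partition of an odd number has a part `1`; replace it by a `2`.
theorem E_even_le_E_odd (d m : ℕ) : E (2 * d) m ≤ E (2 * d + 1) m := by
  induction d generalizing m with
  | zero => exact E_le_E_two_mul_add_one 0 m
  | succ d ih =>
    obtain _ | _ | m := m
    · simp [mul_add, E_even_zero]
    · calc E (2 * d + 2) 1
          = E d 0 := by rw [E_even_succ, E_odd_zero]
        _ ≤ E (d + 1) 1 := E_le_E_succ_succ d 0
        _ ≤ E (2 * (d + 1) + 1) 1 := E_le_E_two_mul_add_one _ _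
    · calc E (2 * d + 2) (m + 2)
          = E (2 * d) m + E d (m + 1) := by rw [E_even_succ, E_odd_succ]
        _ ≤ E (2 * d + 1) m + E (d + 1) (m + 2) := add_le_add (ih m) (E_le_E_succ_succ d _)
        _ = E (2 * d + 3) (m + 2) := (E_odd_add_two d m).symm

theorem E_odd_le_add_two_add (d m : ℕ) :
    E (2 * d + 1) (m + 1) ≤ E (2 * d + 1) (m + 3) + E (4 * d + 1) m :=
  calc E (2 * d + 1) (m + 1)
      = E d (m + 1) + E (2 * d) m := by rw [E_odd_succ, add_comm]
    _ ≤ E (2 * d + 1) (m + 3) + E (2 * (2 * d) + 1) m :=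
      add_le_add (E_le_E_two_mul_add_one_add d (by omega : 2 ≤ m + 1 + 1))
        (E_le_E_two_mul_add_one _ _)
    _ = E (2 * d + 1) (m + 3) + E (4 * d + 1) m := by grind

theorem E_four_mul_add_five_le (d m : ℕ) :
    E (4 * d + 5) (m + 3) ≤ E (4 * d + 5) (m + 4) + E (8 * d + 9) (m + 1) := by
  have expand (j : ℕ) : E (4 * d + 5) (j + 3) = E (4 * d + 3) (j + 1) + E (2 * d + 1) (j + 2) := by
    grind [E_odd_add_two (2 * d + 1) (j + 1), E_even_succ d (j + 2)]
  have expand_left : E (4 * d + 3) (m + 1) = E (4 * d + 2) m + E (2 * d + 1) (m + 1) := by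
    grind [E_odd_succ (2 * d + 1) m]
  have expand_right : E (4 * d + 3) (m + 2) = E (4 * d + 1) m + E (2 * d + 1) (m + 2) := by
    grind [E_odd_add_two (2 * d) m]
  have even_part : E (4 * d + 2) m ≤ E (8 * d + 9) (m + 1) :=
    calc E (4 * d + 2) m
        ≤ E (4 * d + 3) m := by grind [E_even_le_E_odd (2 * d + 1) m]
      _ ≤ E (4 * d + 4) (m + 1) := E_le_E_succ_succ _ _
      _ ≤ E (8 * d + 9) (m + 1) := by grind [E_le_E_two_mul_add_one (4 * d + 4) (m + 1)]
  have odd_part := E_odd_le_add_two_add d m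
  calc E (4 * d + 5) (m + 3)
      = E (4 * d + 2) m + E (2 * d + 1) (m + 1) + E (2 * d + 1) (m + 2) := by
        rw [expand, expand_left]
    _ ≤ E (8 * d + 9) (m + 1) + (E (2 * d + 1) (m + 3) + E (4 * d + 1) m)
          + E (2 * d + 1) (m + 2) := by gcongr
    _ = E (4 * d + 5) (m + 4) + E (8 * d + 9) (m + 1) := by
        rw [expand (m + 1), expand_right]; ring

theorem two_mul_E_four_mul_add_five_le (d m : ℕ) :
    2 * E (4 * d + 5) (m + 3) ≤ E (8 * d + 13) (m + 5) :=
  calc 2 * E (4 * d + 5) (m + 3)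
      ≤ E (8 * d + 9) (m + 1) + E (4 * d + 5) (m + 3) + E (4 * d + 5) (m + 4) := by
        linarith [E_four_mul_add_five_le d m]
    _ = E (8 * d + 11) (m + 3) + E (4 * d + 6) (m + 5) := by
        grind [E_odd_add_two (4 * d + 4) (m + 1), E_even_succ (2 * d + 2) (m + 4)]
    _ = E (8 * d + 13) (m + 5) := by grind [E_odd_add_two (4 * d + 5) (m + 3)]

theorem two_mul_E_four_mul_add_seven_le_of_le {d m : ℕ} (hm : 5 ≤ m)
    (h : 2 * E (2 * d + 3) m ≤ E (4 * d + 7) (m + 2)) :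
    2 * E (4 * d + 7) m ≤ E (8 * d + 15) (m + 2) := by
  obtain ⟨m, rfl⟩ := Nat.exists_eq_add_of_le' hm
  calc 2 * E (4 * d + 7) (m + 5)
      = 2 * E (4 * d + 5) (m + 3) + 2 * E (2 * d + 3) (m + 5) := by
        grind [E_odd_add_two (2 * d + 2) (m + 3)]
    _ ≤ E (8 * d + 13) (m + 5) + E (4 * d + 7) (m + 7) :=
        add_le_add (two_mul_E_four_mul_add_five_le d m) h
    _ = E (8 * d + 15) (m + 7) := by grind [E_odd_add_two (4 * d + 6) (m + 5)]

theorem two_mul_E_two_pow_sub_one_le {m : ℕ} (t : ℕ) (hm : 5 ≤ m) :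
    2 * E (2 ^ t - 1) m ≤ E (2 ^ (t + 1) - 1) (m + 2) := by
  obtain ht | ht := le_total t 2
  · have : 2 ^ t ≤ 2 ^ 2 := Nat.pow_le_pow_right two_pos ht
    simp [E_eq_zero_of_lt (by omega : 2 ^ t - 1 < m)]
  induction t, ht using Nat.le_induction with
  | base => simp [E_eq_zero_of_lt (by omega : 3 < m)]
  | succ t ht ih =>
    have four_le : 2 ^ 2 ≤ 2 ^ t := Nat.pow_le_pow_right two_pos ht
    have two_dvd : 2 ∣ 2 ^ t := dvd_pow_self 2 (by omega)
    obtain ⟨d, hd⟩ : ∃ d, 2 ^ t = 2 * d + 4 := ⟨2 ^ t / 2 - 2, by omega⟩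
    have h₀ : 2 ^ t - 1 = 2 * d + 3 := by omega
    have h₁ : 2 ^ (t + 1) - 1 = 4 * d + 7 := by omega
    have h₂ : 2 ^ (t + 1 + 1) - 1 = 8 * d + 15 := by omega
    rw [h₀, h₁] at ih
    rw [h₁, h₂]
    exact two_mul_E_four_mul_add_seven_le_of_le hm ih

theorem E_two_pow_succ {t : ℕ} (ht : t ≠ 0) (m : ℕ) : E (2 ^ t) (m + 1) = E (2 ^ t - 1) m := by
  obtain ⟨t, rfl⟩ := Nat.exists_eq_succ_of_ne_zero ht
  obtain ⟨d, hd⟩ := Nat.exists_eq_add_of_le' (Nat.one_le_two_pow (n := t))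
  simpa [pow_succ', hd, mul_add] using E_even_succ d m

theorem two_mul_E_two_pow_le {m : ℕ} (t : ℕ) (hm : 6 ≤ m) :
    2 * E (2 ^ t) m ≤ E (2 ^ (t + 1)) (m + 2) := by
  obtain rfl | ht := eq_or_ne t 0
  · simp [E_eq_zero_of_lt (by omega : 1 < m)]
  obtain ⟨m, rfl⟩ := Nat.exists_eq_succ_of_ne_zero (by omega : m ≠ 0)
  rw [E_two_pow_succ ht, E_two_pow_succ t.succ_ne_zero]
  exact two_mul_E_two_pow_sub_one_le t (by omega)

/-- For `t ≥ 2`, `dim Ext^{2t−2}(Δ(0), Δ(2·2^t)) = E (2^t) (2t − 2)` is at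
least `2^{t−2}`. -/
theorem E_two_pow_ge (t : ℕ) (ht : 2 ≤ t) : 2 ^ (t - 2) ≤ E (2 ^ t) (2 * t - 2) := by
  obtain ht₄ | ht₄ := lt_or_ge t 4
  · interval_cases t <;> norm_num [E, Nat.odd_iff]
  induction t, ht₄ using Nat.le_induction with
  | base => norm_num [E, Nat.odd_iff]
  | succ t ht₄ ih =>
    calc 2 ^ (t + 1 - 2)
        = 2 * 2 ^ (t - 2) := by rw [← pow_succ', Nat.sub_add_comm (by omega)]
      _ ≤ 2 * E (2 ^ t) (2 * t - 2) := by gcongr; exact ih (by omega)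
      _ ≤ E (2 ^ (t + 1)) (2 * t - 2 + 2) := two_mul_E_two_pow_le t (by omega)
      _ = E (2 ^ (t + 1)) (2 * (t + 1) - 2) := by congr 1; omega
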